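/- (Theorem 2: shift invariance of the max-centered reconstruction.) Let M ≥ 2 be an integer, let Q be any M×M real matrix, and let F be an M×M real matrix, all indexed cyclically by ZMod M, such that F attains its maximal value at a unique position, and such that for every c, r in ZMod M the wrap-shifted matrix F^{[c,r]} also attains its maximal value at a unique position. Define the reconstruction operator F̂*(F) = Qᵀ · A*_max(F) · Q. Then for all c, r in ZMod M, F̂*(F^{[c,r]}) = F̂*(F); that is, the reconstruction F̂* is invariant under arbitrary wrap-shifts of the input. -/

import Mathlib

/-!
Wrap-shifts compose additively, and in a matrix product equal shifts of the contracted index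
cancel. Hence shifting the input `F` and the pivot by the same amount leaves
`Q^{[r,0]} * F * (Qᵀ)^{[0,c]}` unchanged. The unique maximum of `F` moves along with the shift, so
max-centering moves the pivot by exactly that amount.
-/

open Matrix

/-- The wrap-shift of an `M × M` matrix `F` (indexed cyclically by `ZMod M`)
by `(c, r)`: columns are shifted cyclically by `c` and rows by `r`, i.e.
`F^{[c,r]} (i, j) = F (i - r, j - c)`. -/
def wrapShift {M : ℕ} {α : Type*} (F : Matrix (ZMod M) (ZMod M) α) (c r : ZMod M) :
    Matrix (ZMod M) (ZMod M) α :=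
  fun i j => F (i - r) (j - c)

/-- The pivoted dGHM matrix of `F` for pivot position `(c, r)`:
`A*_{c,r}(F) = (4 / (M-1)^2) • Q^{[r,0]} * F * (Qᵀ)^{[0,c]}`. -/
noncomputable def dGHM {M : ℕ} [NeZero M] (Q : Matrix (ZMod M) (ZMod M) ℝ)
    (c r : ZMod M) (F : Matrix (ZMod M) (ZMod M) ℝ) : Matrix (ZMod M) (ZMod M) ℝ :=
  (4 / ((M : ℝ) - 1) ^ 2) • (wrapShift Q r 0 * F * wrapShift Qᵀ 0 c)

/-- `F` attains its maximal value at the unique position `(i₀, j₀)`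
(row `i₀`, column `j₀`). -/
def IsUniqueMax {M : ℕ} (F : Matrix (ZMod M) (ZMod M) ℝ) (i₀ j₀ : ZMod M) : Prop :=
  ∀ i j : ZMod M, (i, j) ≠ (i₀, j₀) → F i j < F i₀ j₀

section wrapShift

variable {M : ℕ} {α : Type*}

lemma wrapShift_zero_zero (F : Matrix (ZMod M) (ZMod M) α) : wrapShift F 0 0 = F := by
  ext i j
  simp only [wrapShift, sub_zero]

lemma wrapShift_wrapShift (F : Matrix (ZMod M) (ZMod M) α) (c r c' r' : ZMod M) :
    wrapShift (wrapShift F c r) c' r' = wrapShift F (c + c') (r + r') := by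
  ext i j
  simp only [wrapShift, sub_sub, add_comm]

lemma wrapShift_mul_wrapShift [NeZero M] [Mul α] [AddCommMonoid α]
    (A B : Matrix (ZMod M) (ZMod M) α) (c k r : ZMod M) :
    wrapShift A k r * wrapShift B c k = wrapShift (A * B) c r :=
  submatrix_mul_equiv A B (· - r) (Equiv.subRight k) (· - c)

end wrapShift

section IsUniqueMax

variable {M : ℕ} {F : Matrix (ZMod M) (ZMod M) ℝ} {i₀ j₀ i₁ j₁ : ZMod M}

lemma IsUniqueMax.position_unique (h₀ : IsUniqueMax F i₀ j₀) (h₁ : IsUniqueMax F i₁ j₁) :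
    (i₀, j₀) = (i₁, j₁) := by
  by_contra hne
  exact lt_asymm (h₀ i₁ j₁ (Ne.symm hne)) (h₁ i₀ j₀ hne)

lemma IsUniqueMax.wrapShift (h : IsUniqueMax F i₀ j₀) (c r : ZMod M) :
    IsUniqueMax (wrapShift F c r) (i₀ + r) (j₀ + c) := by
  intro i j hne
  have hne' : (i - r, j - c) ≠ (i₀, j₀) := by
    simpa only [ne_eq, Prod.mk.injEq, sub_eq_iff_eq_add] using hne
  simpa only [_root_.wrapShift, add_sub_cancel_right] using h (i - r) (j - c) hne'

end IsUniqueMax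

lemma dGHM_wrapShift {M : ℕ} [NeZero M] (Q F : Matrix (ZMod M) (ZMod M) ℝ)
    (c₀ r₀ c r : ZMod M) :
    dGHM Q (c₀ + c) (r₀ + r) (wrapShift F c r) = dGHM Q c₀ r₀ F := by
  have shift_left : wrapShift Q (r₀ + r) 0 = wrapShift (wrapShift Q r₀ 0) r 0 := by
    rw [wrapShift_wrapShift, add_zero]
  have shift_right : wrapShift Qᵀ 0 (c₀ + c) = wrapShift (wrapShift Qᵀ 0 c₀) 0 c := by
    rw [wrapShift_wrapShift, add_zero]
  simp only [dGHM, shift_left, shift_right, wrapShift_mul_wrapShift, wrapShift_zero_zero]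

/-- Theorem 2: the max-centered reconstruction `F̂*(F) = Qᵀ * A*_max(F) * Q` is
invariant under arbitrary wrap-shifts of the input.  The max-centered dGHM matrix
of a matrix with a unique maximal entry at row `i₀`, column `j₀` is `A*_{j₀, i₀}`. -/
theorem reconstruction_shift_invariant {M : ℕ} [NeZero M] (hM : 2 ≤ M)
    (Q F : Matrix (ZMod M) (ZMod M) ℝ) (rmax cmax : ZMod M)
    (hF : IsUniqueMax F rmax cmax)
    (c r : ZMod M) (r' c' : ZMod M)
    (hF' : IsUniqueMax (wrapShift F c r) r' c') :
    Qᵀ * dGHM Q c' r' (wrapShift F c r) * Q = Qᵀ * dGHM Q cmax rmax F * Q := by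
  obtain ⟨rfl, rfl⟩ : r' = rmax + r ∧ c' = cmax + c :=
    Prod.mk.inj (hF'.position_unique (hF.wrapShift c r))
  rw [dGHM_wrapShift]
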